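/- Let $V$ be a finite-dimensional real vector space, let $W$ be a finite-dimensional complex vector space, and let $A : V \to W$ be an injective $\mathbb{R}$-linear map. Let $A_{\mathbb{C}} : \mathbb{C} \otimes_{\mathbb{R}} V \to W$ be the unique $\mathbb{C}$-linear map with $A_{\mathbb{C}}(z \otimes v) = z \cdot A(v)$. Then the kernel of $A_{\mathbb{C}}$ is real-linearly isomorphic to the real subspace $A(V) \cap i\,A(V)$ of $W$; in particular $\dim_{\mathbb{R}} \ker A_{\mathbb{C}} = \dim_{\mathbb{R}}\big(A(V) \cap i\,A(V)\big)$, and hence the complex rank of $A_{\mathbb{C}}$ equals $\dim_{\mathbb{R}} V - \tfrac{1}{2}\dim_{\mathbb{R}}\big(A(V) \cap i\,A(V)\big)$. -/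

import Mathlib

open scoped TensorProduct

open Module

/-!
Under the real-linear splitting `ℂ ⊗ V ≃ V × V`, the complexification of `A` becomes
`(v, w) ↦ A v + i A w`. For injective `f` and `g`, the kernel of `(v, w) ↦ f v + g w` is
carried isomorphically onto `range f ∩ range g` by `(v, w) ↦ f v`; take `f = A`, `g = i A`.
The rank formula is then rank-nullity over `ℂ`, with the kernel measured over `ℝ`.
-/

section KerCoprod

variable {R M N P : Type*} [Ring R] [AddCommGroup M] [AddCommGroup N] [AddCommGroup P]
  [Module R M] [Module R N] [Module R P]

theorem map_comp_fst_ker_coprod (f : M →ₗ[R] P) (g : N →ₗ[R] P) :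
    (LinearMap.ker (f.coprod g)).map (f ∘ₗ LinearMap.fst R M N) =
      LinearMap.range f ⊓ LinearMap.range g := by
  ext p
  constructor
  · rintro ⟨⟨x, y⟩, hxy, rfl⟩
    have hfg : f x + g y = 0 := hxy
    exact ⟨⟨x, rfl⟩, -y, by rw [map_neg]; exact (eq_neg_of_add_eq_zero_left hfg).symm⟩
  · rintro ⟨⟨x, rfl⟩, y, hy⟩
    exact ⟨(x, -y), by simp [hy], rfl⟩

theorem injective_comp_fst_domRestrict_ker_coprod {f : M →ₗ[R] P} {g : N →ₗ[R] P}
    (hf : Function.Injective f) (hg : Function.Injective g) :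
    Function.Injective
      ((f ∘ₗ LinearMap.fst R M N).domRestrict (LinearMap.ker (f.coprod g))) := by
  rw [injective_iff_map_eq_zero]
  rintro ⟨⟨x, y⟩, hxy⟩ hx
  have hfx : f x = 0 := hx
  have hgy : g y = 0 := by simpa [hfx] using hxy
  exact Subtype.ext (Prod.ext ((map_eq_zero_iff f hf).1 hfx) ((map_eq_zero_iff g hg).1 hgy))

/-- The kernel of `(x, y) ↦ f x + g y` is the fibre product of `f` and `-g`; for injective
`f` and `g` this identifies it, via `(x, y) ↦ f x`, with the intersection of the ranges. -/
noncomputable def kerCoprodEquivRangeInf (f : M →ₗ[R] P) (g : N →ₗ[R] P)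
    (hf : Function.Injective f) (hg : Function.Injective g) :
    LinearMap.ker (f.coprod g) ≃ₗ[R] ↥(LinearMap.range f ⊓ LinearMap.range g) :=
  LinearEquiv.ofInjective _ (injective_comp_fst_domRestrict_ker_coprod hf hg) ≪≫ₗ
    LinearEquiv.ofEq _ _ ((LinearMap.range_domRestrict _ _).trans (map_comp_fst_ker_coprod f g))

end KerCoprod

section Complexification

/-- The splitting of a complexification into real and imaginary parts,
`z ⊗ v ↦ (re z • v, im z • v)`. -/
noncomputable def complexTensorEquivProd (V : Type*) [AddCommGroup V] [Module ℝ V] :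
    ℂ ⊗[ℝ] V ≃ₗ[ℝ] V × V :=
  Complex.equivRealProdLm.rTensor V ≪≫ₗ TensorProduct.prodLeft ℝ ℝ ℝ ℝ V ≪≫ₗ
    (TensorProduct.lid ℝ V).prodCongr (TensorProduct.lid ℝ V)

theorem complexTensorEquivProd_tmul {V : Type*} [AddCommGroup V] [Module ℝ V] (z : ℂ) (v : V) :
    complexTensorEquivProd V (z ⊗ₜ[ℝ] v) = (z.re • v, z.im • v) := by
  simp [complexTensorEquivProd]

variable {V W : Type*} [AddCommGroup V] [Module ℝ V] [AddCommGroup W] [Module ℂ W] [Module ℝ W]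
  [IsScalarTower ℝ ℂ W] {A : V →ₗ[ℝ] W} {B : ℂ ⊗[ℝ] V →ₗ[ℂ] W}

theorem restrictScalars_eq_coprod_comp_complexTensorEquivProd
    (hB : ∀ (z : ℂ) (v : V), B (z ⊗ₜ[ℝ] v) = z • A v) :
    B.restrictScalars ℝ =
      A.coprod ((LinearMap.lsmul ℂ W Complex.I).restrictScalars ℝ ∘ₗ A) ∘ₗ
        (complexTensorEquivProd V).toLinearMap := by
  refine TensorProduct.ext' fun z v ↦ ?_
  have hz : z • A v = z.re • A v + z.im • Complex.I • A v := by
    rw [← algebraMap_smul ℂ z.re, ← algebraMap_smul ℂ z.im, smul_smul, ← add_smul,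
      Complex.coe_algebraMap, Complex.re_add_im]
  simpa [complexTensorEquivProd_tmul, hB] using hz

/-- The kernel of the complexification `B` of an injective `A`, identified with
`A(V) ∩ i A(V)` by `1 ⊗ v + i ⊗ w ↦ A v`. -/
noncomputable def kerComplexificationEquiv (hA : Function.Injective A)
    (hB : ∀ (z : ℂ) (v : V), B (z ⊗ₜ[ℝ] v) = z • A v) :
    (LinearMap.ker B).restrictScalars ℝ ≃ₗ[ℝ]
      ↥(LinearMap.range A ⊓
        (LinearMap.range A).map ((LinearMap.lsmul ℂ W Complex.I).restrictScalars ℝ)) :=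
  let iA := (LinearMap.lsmul ℂ W Complex.I).restrictScalars ℝ ∘ₗ A
  have ker_eq : (LinearMap.ker B).restrictScalars ℝ =
      (LinearMap.ker (A.coprod iA)).comap (complexTensorEquivProd V).toLinearMap := by
    rw [← LinearMap.ker_restrictScalars,
      restrictScalars_eq_coprod_comp_complexTensorEquivProd hB, LinearMap.ker_comp]
  have injective_iA : Function.Injective iA :=
    (smul_right_injective W Complex.I_ne_zero).comp hA
  LinearEquiv.ofEq _ _ ker_eq ≪≫ₗ
    (complexTensorEquivProd V).ofSubmodule' _ ≪≫ₗ
    kerCoprodEquivRangeInf A iA hA injective_iA ≪≫ₗ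
    LinearEquiv.ofEq _ _ (by rw [LinearMap.range_comp])

end Complexification

theorem finrank_mul_finrank_range_add_finrank_ker_of_baseChange {F K V W : Type*} [Field F]
    [Field K] [Algebra F K] [AddCommGroup V] [Module F V] [FiniteDimensional F V]
    [AddCommGroup W] [Module K W] (B : K ⊗[F] V →ₗ[K] W) :
    finrank F K * finrank K (LinearMap.range B) +
      finrank F ((LinearMap.ker B).restrictScalars F) = finrank F K * finrank F V := by
  have ker_tower : finrank F K * finrank K (LinearMap.ker B) =
      finrank F ((LinearMap.ker B).restrictScalars F) :=
    by
    have : Free K (LinearMap.ker B) := Free.of_divisionRing K (LinearMap.ker B)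
    exact finrank_mul_finrank F K (LinearMap.ker B)
  rw [← ker_tower, ← mul_add, LinearMap.finrank_range_add_finrank_ker, finrank_baseChange]

theorem stmt_7_general {V W : Type*} [AddCommGroup V] [Module ℝ V] [FiniteDimensional ℝ V]
    [AddCommGroup W] [Module ℂ W] [Module ℝ W] [IsScalarTower ℝ ℂ W]
    (A : V →ₗ[ℝ] W) (hA : Function.Injective A)
    (B : ℂ ⊗[ℝ] V →ₗ[ℂ] W)
    (hB : ∀ (z : ℂ) (v : V), B (z ⊗ₜ[ℝ] v) = z • A v) :
    Nonempty
      ((LinearMap.ker B).restrictScalars ℝ ≃ₗ[ℝ]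
        ↥(LinearMap.range A ⊓
          (LinearMap.range A).map ((LinearMap.lsmul ℂ W Complex.I).restrictScalars ℝ))) ∧
    finrank ℝ ((LinearMap.ker B).restrictScalars ℝ) =
      finrank ℝ ↥(LinearMap.range A ⊓
        (LinearMap.range A).map ((LinearMap.lsmul ℂ W Complex.I).restrictScalars ℝ)) ∧
    (finrank ℂ (LinearMap.range B) : ℝ) =
      (finrank ℝ V : ℝ) -
        (1 / 2) * (finrank ℝ ↥(LinearMap.range A ⊓
          (LinearMap.range A).map ((LinearMap.lsmul ℂ W Complex.I).restrictScalars ℝ)) : ℝ) := by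
  have finrank_ker := (kerComplexificationEquiv hA hB).finrank_eq
  refine ⟨⟨kerComplexificationEquiv hA hB⟩, finrank_ker, ?_⟩
  have rank_nullity := finrank_mul_finrank_range_add_finrank_ker_of_baseChange B
  rw [finrank_ker, Complex.finrank_real_complex] at rank_nullity
  rify at rank_nullity
  linarith

/-- For an injective `ℝ`-linear map `A : V → W` into a finite-dimensional
complex vector space, the kernel of the complexification `A_ℂ : ℂ ⊗[ℝ] V → W` is
real-linearly isomorphic to `A(V) ∩ i A(V)`; in particular their real dimensions agree,
and the complex rank of `A_ℂ` equals `dim_ℝ V - ½ dim_ℝ (A(V) ∩ i A(V))`. -/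
theorem stmt_7 {V W : Type*} [AddCommGroup V] [Module ℝ V] [FiniteDimensional ℝ V]
    [AddCommGroup W] [Module ℂ W] [Module ℝ W] [IsScalarTower ℝ ℂ W]
    [FiniteDimensional ℂ W]
    (A : V →ₗ[ℝ] W) (hA : Function.Injective A)
    (B : ℂ ⊗[ℝ] V →ₗ[ℂ] W)
    (hB : ∀ (z : ℂ) (v : V), B (z ⊗ₜ[ℝ] v) = z • A v) :
    Nonempty
      ((LinearMap.ker B).restrictScalars ℝ ≃ₗ[ℝ]
        ↥(LinearMap.range A ⊓
          (LinearMap.range A).map ((LinearMap.lsmul ℂ W Complex.I).restrictScalars ℝ))) ∧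
    finrank ℝ ((LinearMap.ker B).restrictScalars ℝ) =
      finrank ℝ ↥(LinearMap.range A ⊓
        (LinearMap.range A).map ((LinearMap.lsmul ℂ W Complex.I).restrictScalars ℝ)) ∧
    (finrank ℂ (LinearMap.range B) : ℝ) =
      (finrank ℝ V : ℝ) -
        (1 / 2) * (finrank ℝ ↥(LinearMap.range A ⊓
          (LinearMap.range A).map ((LinearMap.lsmul ℂ W Complex.I).restrictScalars ℝ)) : ℝ) :=
  stmt_7_general A hA B hB
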